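/- Assume 1 − (d−1)ν − (2K−1)dμ_B > 0. Let S ⊆ I1 with |S| = k (0 ≤ k < K), let P_S denote the orthogonal projection onto the column span of the blocks {A_l : l ∈ S}, and set v = Σ_{l∈I1∖S} A_l x̃_l. Then max_{l∈I1} ‖A_l^T P_S v‖_2 ≤ dμ_B (K−k) · max_{l∈I1∖S} ‖x̃_l‖_2. -/

import Mathlib

/- Setting: a measurement matrix `A ∈ ℝ^{m×n}` with `n = L·d`, partitioned into `L` column
blocks of size `m×d`; columns are indexed by pairs `(l, j)` (block `l`, position `j`). -/

noncomputable section

open Finset Matrix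

/-- Euclidean (ℓ₂) norm of a finitely indexed real vector. -/
def e2norm {ι : Type*} [Fintype ι] (v : ι → ℝ) : ℝ := Real.sqrt (∑ i, v i ^ 2)

/-- Euclidean inner (dot) product of two real vectors. -/
def dotp {ι : Type*} [Fintype ι] (u v : ι → ℝ) : ℝ := ∑ i, u i * v i

/-- The `(l, j)` column of the block matrix `A` (block `l`, position `j` inside the block). -/
def acol {m L d : ℕ} (A : Matrix (Fin m) (Fin L × Fin d) ℝ) (l : Fin L) (j : Fin d) :
    Fin m → ℝ :=
  fun i => A i (l, j)

/-- `A_lᵀ v` : correlation of the `l`-th block of `A` with a vector `v ∈ ℝ^m`. -/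
def blkT {m L d : ℕ} (A : Matrix (Fin m) (Fin L × Fin d) ℝ) (l : Fin L) (v : Fin m → ℝ) :
    Fin d → ℝ :=
  fun j => dotp (acol A l j) v

/-- Spectral norm (largest singular value) `ρ(X)` of a real matrix, as the supremum of
`‖Xu‖₂ / ‖u‖₂` over nonzero `u`. -/
def specNorm {p q : ℕ} (X : Matrix (Fin p) (Fin q) ℝ) : ℝ :=
  ⨆ u : {u : Fin q → ℝ // u ≠ 0}, e2norm (X *ᵥ u.1) / e2norm u.1

/-- The `d × d` cross-Gram matrix `A_iᵀ A_j` of two blocks of `A`. -/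
def bgram {m L d : ℕ} (A : Matrix (Fin m) (Fin L × Fin d) ℝ) (i j : Fin L) :
    Matrix (Fin d) (Fin d) ℝ :=
  fun a b => dotp (acol A i a) (acol A j b)

/-- Block-coherence `μ_B = max_{i ≠ j} (1/d) ρ(A_iᵀ A_j)`. -/
def blockCoh {m L d : ℕ} (A : Matrix (Fin m) (Fin L × Fin d) ℝ) : ℝ :=
  ⨆ p : {p : Fin L × Fin L // p.1 ≠ p.2},
    (1 / (d : ℝ)) * specNorm (bgram A p.1.1 p.1.2)

/-- Sub-coherence `ν`: the maximum of `|a_iᵀ a_j|` over pairs of distinct columns lying in the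
same block of `A`. -/
def subCoh {m L d : ℕ} (A : Matrix (Fin m) (Fin L × Fin d) ℝ) : ℝ :=
  ⨆ t : {t : Fin L × Fin d × Fin d // t.2.1 ≠ t.2.2},
    |dotp (acol A t.1.1 t.1.2.1) (acol A t.1.1 t.1.2.2)|


lemma e2norm_eq {ι : Type*} [Fintype ι] (v : ι → ℝ) : e2norm v = ‖WithLp.toLp 2 v‖ := by
  simp [e2norm, EuclideanSpace.norm_eq]

lemma e2norm_nonneg {ι : Type*} [Fintype ι] (v : ι → ℝ) : 0 ≤ e2norm v := Real.sqrt_nonneg _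

lemma e2norm_sum_le {ι κ : Type*} [Fintype ι] (T : Finset κ) (f : κ → ι → ℝ) :
    e2norm (∑ j ∈ T, f j) ≤ ∑ j ∈ T, e2norm (f j) := by
  simp only [e2norm_eq]
  rw [WithLp.toLp_sum]
  exact norm_sum_le _ _

lemma e2norm_sub_le {ι : Type*} [Fintype ι] (f g : ι → ℝ) :
    e2norm (f - g) ≤ e2norm f + e2norm g := by
  simp only [e2norm_eq]
  rw [WithLp.toLp_sub]
  exact norm_sub_le _ _

lemma e2norm_sq {ι : Type*} [Fintype ι] (v : ι → ℝ) : e2norm v ^ 2 = ∑ i, v i ^ 2 :=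
  Real.sq_sqrt (Finset.sum_nonneg fun i _ => sq_nonneg _)

lemma dotp_le {ι : Type*} [Fintype ι] (u v : ι → ℝ) : dotp u v ≤ e2norm u * e2norm v :=
  Real.sum_mul_le_sqrt_mul_sqrt _ _ _

lemma specNorm_bdd {p q : ℕ} (X : Matrix (Fin p) (Fin q) ℝ) :
    BddAbove (Set.range fun u : {u : Fin q → ℝ // u ≠ 0} =>
      e2norm (X *ᵥ u.1) / e2norm u.1) := by
  refine ⟨‖(Matrix.toEuclideanLin X).toContinuousLinearMap‖, ?_⟩
  rintro _ ⟨u, rfl⟩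
  refine div_le_of_le_mul₀ (e2norm_nonneg _) (norm_nonneg _) ?_
  have h := (Matrix.toEuclideanLin X).toContinuousLinearMap.le_opNorm (WithLp.toLp 2 u.1)
  rw [e2norm_eq, e2norm_eq]
  simpa using h

lemma specNorm_le {p q : ℕ} (X : Matrix (Fin p) (Fin q) ℝ) (u : Fin q → ℝ) :
    e2norm (X *ᵥ u) ≤ specNorm X * e2norm u := by
  by_cases hu : u = 0
  · subst hu; simp [e2norm]
  · have h := le_ciSup (specNorm_bdd X) ⟨u, hu⟩
    have hp : 0 < e2norm u := by
      rw [e2norm_eq]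
      exact norm_pos_iff.2 (by simpa using hu)
    exact (div_le_iff₀ hp).1 h

lemma specNorm_nonneg {p q : ℕ} (X : Matrix (Fin p) (Fin q) ℝ) : 0 ≤ specNorm X :=
  Real.iSup_nonneg fun _ => div_nonneg (e2norm_nonneg _) (e2norm_nonneg _)

lemma blockCoh_nonneg {m L d : ℕ} (A : Matrix (Fin m) (Fin L × Fin d) ℝ) : 0 ≤ blockCoh A :=
  Real.iSup_nonneg fun _ => mul_nonneg (by positivity) (specNorm_nonneg _)

lemma subCoh_nonneg {m L d : ℕ} (A : Matrix (Fin m) (Fin L × Fin d) ℝ) : 0 ≤ subCoh A :=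
  Real.iSup_nonneg fun _ => abs_nonneg _

lemma bgram_off {m L d : ℕ} (hd : 0 < d) (A : Matrix (Fin m) (Fin L × Fin d) ℝ)
    {i j : Fin L} (hij : i ≠ j) (u : Fin d → ℝ) :
    e2norm (bgram A i j *ᵥ u) ≤ d * blockCoh A * e2norm u := by
  have h := le_ciSup (f := fun p : {p : Fin L × Fin L // p.1 ≠ p.2} =>
    (1 / (d : ℝ)) * specNorm (bgram A p.1.1 p.1.2)) (Set.finite_range _).bddAbove ⟨(i, j), hij⟩
  have hd' : (0 : ℝ) < d := by exact_mod_cast hd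
  have h2 : specNorm (bgram A i j) ≤ d * blockCoh A := by
    have h3 : (1 / (d : ℝ)) * specNorm (bgram A i j) ≤ blockCoh A := h
    rw [one_div, inv_mul_le_iff₀ hd'] at h3
    exact h3
  exact (specNorm_le _ _).trans (mul_le_mul_of_nonneg_right h2 (e2norm_nonneg _))

lemma subCoh_le {m L d : ℕ} (A : Matrix (Fin m) (Fin L × Fin d) ℝ) (l : Fin L)
    {a b : Fin d} (hab : a ≠ b) : |dotp (acol A l a) (acol A l b)| ≤ subCoh A :=
  le_ciSup (f := fun t : {t : Fin L × Fin d × Fin d // t.2.1 ≠ t.2.2} =>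
    |dotp (acol A t.1.1 t.1.2.1) (acol A t.1.1 t.1.2.2)|) (Set.finite_range _).bddAbove
    ⟨(l, a, b), hab⟩

lemma bgram_diag {m L d : ℕ} (A : Matrix (Fin m) (Fin L × Fin d) ℝ)
    (hA : ∀ l j, e2norm (acol A l j) = 1) (l : Fin L) (c : Fin d → ℝ) :
    (1 - ((d : ℝ) - 1) * subCoh A) * e2norm c ≤ e2norm (bgram A l l *ᵥ c) := by
  have hν := subCoh_nonneg A
  have key : (1 - ((d : ℝ) - 1) * subCoh A) * e2norm c ^ 2 ≤
      e2norm c * e2norm (bgram A l l *ᵥ c) := by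
    refine le_trans ?_ (dotp_le _ _)
    have hterm : ∀ a b, (if a = b then (1 + subCoh A) * c a ^ 2 else 0)
        - subCoh A * (|c a| * |c b|) ≤ c a * (bgram A l l a b * c b) := by
      intro a b
      by_cases hab : a = b
      · subst hab
        have h1 : bgram A l l a a = 1 := by
          have := e2norm_sq (acol A l a)
          rw [hA] at this
          simp only [bgram, dotp]
          rw [one_pow] at this
          rw [this]
          exact Finset.sum_congr rfl fun _ _ => by ring
        rw [h1, if_pos rfl, ← sq, sq_abs]
        exact le_of_eq (by ring)
      · rw [if_neg hab]
        have h1 : |c a * (bgram A l l a b * c b)| ≤ subCoh A * (|c a| * |c b|) := by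
          rw [abs_mul, abs_mul]
          have h2 : |bgram A l l a b| ≤ subCoh A := subCoh_le A l hab
          have := mul_le_mul_of_nonneg_right h2 (mul_nonneg (abs_nonneg (c a)) (abs_nonneg (c b)))
          linarith
        have := (abs_le.1 h1).1
        linarith
    have hsum := Finset.sum_le_sum fun a (_ : a ∈ (Finset.univ : Finset (Fin d))) =>
      Finset.sum_le_sum fun b (_ : b ∈ (Finset.univ : Finset (Fin d))) => hterm a b
    have hr : ∑ a, ∑ b, c a * (bgram A l l a b * c b) = dotp c (bgram A l l *ᵥ c) := by
      simp [dotp, Matrix.mulVec, dotProduct, Finset.mul_sum]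
    have hl : ∑ a, ∑ b, ((if a = b then (1 + subCoh A) * c a ^ 2 else 0)
        - subCoh A * (|c a| * |c b|)) =
        (1 + subCoh A) * e2norm c ^ 2 - subCoh A * (∑ a, |c a|) ^ 2 := by
      rw [e2norm_sq, sq (∑ a, |c a|), Finset.sum_mul_sum]
      simp [Finset.sum_sub_distrib, Finset.mul_sum]
    rw [hr, hl] at hsum
    have hcs : (∑ a, |c a|) ^ 2 ≤ d * e2norm c ^ 2 := by
      have := sq_sum_le_card_mul_sum_sq (s := (Finset.univ : Finset (Fin d))) (f := fun a => |c a|)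
      simpa [e2norm_sq] using this
    have := mul_le_mul_of_nonneg_left hcs hν
    linarith
  rcases (e2norm_nonneg c).eq_or_lt with h0 | h0
  · rw [← h0, mul_zero]; exact e2norm_nonneg _
  · refine le_of_mul_le_mul_left ?_ h0
    linarith

lemma blkT_sum {m L d : ℕ} (A : Matrix (Fin m) (Fin L × Fin d) ℝ) (l : Fin L)
    (T : Finset (Fin L)) (c : Fin L → Fin d → ℝ) :
    blkT A l (fun i => ∑ j ∈ T, ∑ b, A i (j, b) * c j b) = ∑ j ∈ T, bgram A l j *ᵥ c j := by
  funext a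
  simp only [blkT, dotp, acol, bgram, Matrix.mulVec, dotProduct, Finset.sum_apply,
    Finset.mul_sum, Finset.sum_mul]
  rw [Finset.sum_comm]
  refine Finset.sum_congr rfl fun j _ => ?_
  rw [Finset.sum_comm]
  refine Finset.sum_congr rfl fun b _ => Finset.sum_congr rfl fun i _ => by ring

lemma blkT_sum_le {m L d : ℕ} (hd : 0 < d) (A : Matrix (Fin m) (Fin L × Fin d) ℝ) (l : Fin L)
    (T : Finset (Fin L)) (hl : l ∉ T) (c : Fin L → Fin d → ℝ) :
    e2norm (∑ j ∈ T, bgram A l j *ᵥ c j) ≤ d * blockCoh A * ∑ j ∈ T, e2norm (c j) := by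
  refine (e2norm_sum_le _ _).trans ?_
  rw [Finset.mul_sum]
  refine Finset.sum_le_sum fun j hj => bgram_off hd A ?_ _
  rintro rfl
  exact hl hj

/-- **Eq. (30) of the paper.**  Assume `1 - (d-1)ν - (2K-1)dμ_B > 0`.  For `S ⊆ I1` with
`|S| = k < K`, `v = Σ_{l ∈ I1∖S} A_l x̃_l` and `P_S v` the orthogonal projection of `v` onto
the span of the blocks `A_l, l ∈ S`,
`max_{l ∈ I1} ‖A_lᵀ P_S v‖₂ ≤ dμ_B (K-k) · max_{l ∈ I1∖S} ‖x̃_l‖₂`. -/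
theorem stmt7 {m L d K k : ℕ}
    (hm : m < L * d) (hd : 0 < d)
    (A : Matrix (Fin m) (Fin L × Fin d) ℝ)
    (hA : ∀ l j, e2norm (acol A l j) = 1)
    (μB ν : ℝ) (hμB : μB = blockCoh A) (hν : ν = subCoh A)
    (hcond : 0 < 1 - ((d : ℝ) - 1) * ν - (2 * (K : ℝ) - 1) * d * μB)
    (I1 : Finset (Fin L)) (hcard : I1.card = K) (hKL : K < L)
    (S : Finset (Fin L)) (hS : S ⊆ I1) (hSk : S.card = k) (hk : k < K)
    (xt : Fin L → Fin d → ℝ)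
    (v : Fin m → ℝ) (hv : v = fun i => ∑ l ∈ I1 \ S, ∑ j, A i (l, j) * xt l j)
    (PSv : Fin m → ℝ)
    (hPSv1 : ∃ c : Fin L → Fin d → ℝ, ∀ i, PSv i = ∑ l ∈ S, ∑ j, A i (l, j) * c l j)
    (hPSv2 : ∀ l ∈ S, ∀ j, dotp (acol A l j) (fun i => v i - PSv i) = 0) :
    (⨆ l : {l : Fin L // l ∈ I1}, e2norm (blkT A l.1 PSv)) ≤
      (d : ℝ) * μB * ((K : ℝ) - (k : ℝ)) *
        ⨆ l : {l : Fin L // l ∈ I1 \ S}, e2norm (xt l.1) := by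
  obtain ⟨c, hc⟩ := hPSv1
  have hPS : PSv = fun i => ∑ l ∈ S, ∑ j, A i (l, j) * c l j := funext hc
  set M := ⨆ l : {l : Fin L // l ∈ I1 \ S}, e2norm (xt l.1) with hM
  have hM0 : 0 ≤ M := Real.iSup_nonneg fun _ => e2norm_nonneg _
  have hxM : ∀ l ∈ I1 \ S, e2norm (xt l) ≤ M := fun l hl =>
    le_ciSup (f := fun l : {l : Fin L // l ∈ I1 \ S} => e2norm (xt l.1))
      (Set.finite_range _).bddAbove ⟨l, hl⟩
  have hkK : (k : ℝ) + 1 ≤ K := by exact_mod_cast hk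
  have hcardD : ((I1 \ S).card : ℝ) = K - k := by
    rw [Finset.card_sdiff_of_subset hS, hcard, hSk, Nat.cast_sub hk.le]
  have hX : ∑ l ∈ I1 \ S, e2norm (xt l) ≤ (K - k) * M := by
    refine (Finset.sum_le_card_nsmul _ _ _ hxM).trans ?_
    rw [nsmul_eq_mul, hcardD]
  set D : ℝ := d * μB with hD
  have hD0 : 0 ≤ D := by
    rw [hD, hμB]; exact mul_nonneg (Nat.cast_nonneg _) (blockCoh_nonneg A)
  have hDe : (d : ℝ) * blockCoh A = D := by rw [hD, hμB]
  -- correlation of `v` with the blocks of `S`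
  have hvS : ∀ l ∈ S, e2norm (blkT A l v) ≤ D * ((K - k) * M) := by
    intro l hl
    rw [hv, blkT_sum]
    refine (blkT_sum_le hd A l _ (by simp [hl]) xt).trans ?_
    rw [hDe]
    exact mul_le_mul_of_nonneg_left hX hD0
  have hproj : ∀ l ∈ S, blkT A l PSv = blkT A l v := by
    intro l hl
    funext j
    have := hPSv2 l hl j
    simp only [dotp, mul_sub, Finset.sum_sub_distrib] at this
    simp only [blkT, dotp]
    linarith
  -- bound on the coefficients
  set C := ∑ j ∈ S, e2norm (c j) with hC
  have hcj : ∀ j ∈ S, (1 - ((d : ℝ) - 1) * ν) * e2norm (c j) ≤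
      D * ((K - k) * M) + D * (C - e2norm (c j)) := by
    intro j hj
    rw [hν]
    refine (bgram_diag A hA j (c j)).trans ?_
    have h1 : bgram A j j *ᵥ c j = blkT A j v - ∑ i ∈ S.erase j, bgram A j i *ᵥ c i := by
      rw [← hproj j hj, hPS, blkT_sum, ← Finset.add_sum_erase S _ hj]
      simp
    rw [h1]
    refine (e2norm_sub_le _ _).trans (add_le_add (hvS j hj) ?_)
    refine (blkT_sum_le hd A j _ (by simp) c).trans ?_
    rw [hDe, hC, ← Finset.add_sum_erase S _ hj]
    simp
  have hsum := Finset.sum_le_sum hcj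
  rw [← Finset.mul_sum, Finset.sum_add_distrib, Finset.sum_const, ← Finset.mul_sum, Finset.sum_sub_distrib,
    Finset.sum_const, hSk, ← hC, nsmul_eq_mul, nsmul_eq_mul] at hsum
  have hcond' : 0 < 1 - ((d : ℝ) - 1) * ν - (2 * (K : ℝ) - 1) * D := by
    rw [hD]; linarith
  have hk0 : (0 : ℝ) ≤ k := Nat.cast_nonneg k
  set N := ((K : ℝ) - k) * M with hN
  have hN0 : 0 ≤ N := mul_nonneg (by linarith) hM0
  have hq1 : k * D ≤ 1 - ((d : ℝ) - 1) * ν - (k - 1) * D := by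
    nlinarith [mul_nonneg (sub_nonneg.2 hkK) hD0]
  have hq0 : 0 < 1 - ((d : ℝ) - 1) * ν - (k - 1) * D := by
    nlinarith [mul_nonneg (sub_nonneg.2 hkK) hD0, mul_nonneg hk0 hD0]
  have hCN : C ≤ N := by
    refine le_of_mul_le_mul_left ?_ hq0
    have := mul_le_mul_of_nonneg_right hq1 hN0
    linarith
  have hgoal : D * ((K : ℝ) - k) * M = D * N := by rw [hN]; ring
  rw [hgoal]
  refine Real.iSup_le ?_ (mul_nonneg hD0 hN0)
  rintro ⟨l, hl⟩
  by_cases hlS : l ∈ S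
  · simp only [hproj l hlS]
    exact hvS l hlS
  · simp only [hPS]
    rw [blkT_sum]
    refine (blkT_sum_le hd A l S hlS c).trans ?_
    rw [hDe]
    exact mul_le_mul_of_nonneg_left hCN hD0
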